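/- Let P be the R-measure, c = (1/2, √3/6), α₃ = {S₁(c), S₂(c), S₃(c)}, and let ℓ ≥ 1 and n satisfy 2·3^ℓ < n < 3^{ℓ+1}. Let α₂ be any optimal set of two-means for P and let J ⊆ {1,2,3}^ℓ with card J = n − 2·3^ℓ. Then the set ⋃_{ω ∈ J} S_ω(α₃) ∪ ⋃_{ω ∈ {1,2,3}^ℓ \ J} S_ω(α₂) is an optimal set of n-means for P, where S_ω(β) = {S_ω(a) : a ∈ β}. -/

import Mathlib

open MeasureTheory ENNReal

noncomputable section

abbrev E2 : Type := EuclideanSpace ℝ (Fin 2)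

/-- The point (a, b) of the Euclidean plane. -/
def pt (a b : ℝ) : E2 := (WithLp.equiv 2 (Fin 2 → ℝ)).symm ![a, b]

/-- S₁(x) = x/3. -/
def S1 : E2 → E2 := fun x => (3 : ℝ)⁻¹ • x

/-- S₂(x) = x/3 + (2/3, 0). -/
def S2 : E2 → E2 := fun x => (3 : ℝ)⁻¹ • x + pt (2/3) 0

/-- S₃(x) = x/3 + (1/3, √3/3). -/
def S3 : E2 → E2 := fun x => (3 : ℝ)⁻¹ • x + pt (1/3) (Real.sqrt 3 / 3)

def Smap : Fin 3 → E2 → E2 := ![S1, S2, S3]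

/-- For a word ω = ω₁⋯ω_k ∈ {1,2,3}^k, the composition S_ω = S_{ω₁} ∘ ⋯ ∘ S_{ω_k}. -/
def Sword {k : ℕ} (ω : Fin k → Fin 3) : E2 → E2 :=
  fun x => (List.ofFn fun i => Smap (ω i)).foldr (fun g y => g y) x

/-- The closed triangle with vertices (0,0), (1,0), (1/2, √3/2). -/
def Tri : Set E2 := convexHull ℝ {pt 0 0, pt 1 0, pt (1/2) (Real.sqrt 3 / 2)}

/-- The distortion error ∫ min_{a ∈ α} ‖x − a‖² dμ of a set α of points. -/
def err (μ : Measure E2) (α : Set E2) : ℝ≥0∞ :=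
  ∫⁻ x, ⨅ a ∈ α, ENNReal.ofReal (‖x - a‖ ^ 2) ∂μ

/-- The n-th quantization error V_n(μ). -/
def quantErr (μ : Measure E2) (n : ℕ) : ℝ≥0∞ :=
  ⨅ (α : Set E2) (_ : α.Finite ∧ α.ncard ≤ n), err μ α

/-- α is an optimal set of n-means for μ. -/
def IsOptimal (μ : Measure E2) (n : ℕ) (α : Set E2) : Prop :=
  α.Finite ∧ α.ncard ≤ n ∧ err μ α = quantErr μ n

/-!
Rescale each of the `3 ^ k` cells of level `k` to the whole triangle, with centroid `c`, and put
`g_a(x) = ‖x - c‖² - ‖x - a‖² + 2 / 27`. Then `min_a ‖x - a‖² ≥ ‖x - c‖² + 2 / 27 - ∑_a g_a(x)⁺`.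
The key fact is that the integrals of `g_a⁺` over all cells of level `k` add up to at most `2 / 27`
for every point `a` of the plane: if `a` gains in two cells of level one, it gains at most `1 / 27`
in each and nothing in the third, while at deeper levels only one of the three first-level triangles
contributes, so that induction applies. As `∫ ‖x - c‖² = 1 / 6`, this gives
`54 * 27 ^ k * V_n ≥ 13 * 3 ^ k - 4 * n` for all `k` and `n`.

Equality holds as soon as every cell of level `k` carries an optimal set of one, two or three means,
because `54 * V_m + 4 * m = 13` for `m = 1, 2, 3`.
-/

open scoped RealInnerProductSpace

lemma infEDist_map_le {X Y : Type*} [PseudoEMetricSpace X] [PseudoEMetricSpace Y] {r : NNReal}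
    {f : X → Y} (hf : LipschitzWith r f) {K : Set X} {L : Set Y} (hne : K.Nonempty)
    (hfKL : Set.MapsTo f K L) (x : X) :
    Metric.infEDist (f x) L ≤ r * Metric.infEDist x K := by
  have := hne.to_subtype
  simp only [Metric.infEDist]
  rw [iInf_subtype' (p := (· ∈ K)), ENNReal.mul_iInf (by simp)]
  exact le_iInf fun y => (iInf₂_le (f y) (hfKL y.2)).trans (hf x y)

lemma tendsto_lintegral_min_one_pow_mul {X : Type*} [MeasurableSpace X] {μ : Measure X}
    [IsFiniteMeasure μ] {r : ℝ≥0∞} (hr : r < 1) {g : X → ℝ≥0∞} (hg : Measurable g)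
    (hg_top : ∀ x, g x ≠ ∞) :
    Filter.Tendsto (fun n => ∫⁻ x, min 1 (r ^ n * g x) ∂μ) Filter.atTop (nhds 0) := by
  have pointwise (x : X) :
      Filter.Tendsto (fun n => min 1 (r ^ n * g x)) Filter.atTop (nhds 0) := by
    have hpow : Filter.Tendsto (fun n => r ^ n * g x) Filter.atTop (nhds 0) := by
      simpa using ENNReal.Tendsto.mul_const (ENNReal.tendsto_pow_atTop_nhds_zero_of_lt_one hr)
        (.inr (hg_top x))
    simpa using tendsto_const_nhds.min hpow
  simpa using tendsto_lintegral_of_dominated_convergence (μ := μ) (fun _ => 1)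
    (fun n => measurable_const.min (hg.const_mul (r ^ n)))
    (fun n => .of_forall fun x => min_le_left _ _) (by simp) (.of_forall pointwise)

section SelfSimilarMeasure

variable {ι X : Type*} [Fintype ι] [MeasurableSpace X]

/-- `μ` is a self-similar measure, i.e. an invariant measure in the sense of Hutchinson, of the
iterated function system `S` with weights `p`. -/
def IsSelfSimilar (p : ι → ℝ≥0∞) (S : ι → X → X) (μ : Measure X) : Prop :=
  μ = ∑ i, p i • μ.map (S i)

namespace IsSelfSimilar

variable {p : ι → ℝ≥0∞} {S : ι → X → X} {μ : Measure X}

lemma lintegral_eq (hμ : IsSelfSimilar p S μ) (hS : ∀ i, Measurable (S i)) {f : X → ℝ≥0∞}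
    (hf : Measurable f) : ∫⁻ x, f x ∂μ = ∑ i, p i * ∫⁻ x, f (S i x) ∂μ := by
  conv_lhs => rw [hμ]
  simp only [lintegral_finsetSum_measure, lintegral_smul_measure, lintegral_map hf (hS _),
    smul_eq_mul]

lemma integral_eq {F : Type*} [NormedAddCommGroup F] [NormedSpace ℝ F] (hμ : IsSelfSimilar p S μ)
    (hS : ∀ i, Measurable (S i)) {f : X → F} (hfm : StronglyMeasurable f) (hf : Integrable f μ) :
    ∫ x, f x ∂μ = ∑ i, (p i).toReal • ∫ x, f (S i x) ∂μ := by
  have hsum : Integrable f (∑ i, p i • μ.map (S i)) := hμ ▸ hf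
  conv_lhs => rw [hμ]
  rw [integral_finsetSum_measure (integrable_finsetSum_measure.1 hsum)]
  simp only [integral_smul_measure, integral_map (hS _).aemeasurable hfm.aestronglyMeasurable]

/-- Under the contractions the truncated integral of `r ^ n * d(x, K)` cannot decrease with `n`,
although it tends to zero. -/
theorem ae_mem [PseudoMetricSpace X] [BorelSpace X] [IsFiniteMeasure μ] (hμ : IsSelfSimilar p S μ)
    (hp : ∑ i, p i = 1) {r : NNReal} (hr : r < 1) (hS : ∀ i, LipschitzWith r (S i))
    {K : Set X} (hK : IsClosed K) (hne : K.Nonempty) (hSK : ∀ i, Set.MapsTo (S i) K K) :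
    ∀ᵐ x ∂μ, x ∈ K := by
  set f : ℕ → X → ℝ≥0∞ := fun n x => min 1 (r ^ n * Metric.infEDist x K) with hf
  have f_meas (n : ℕ) : Measurable (f n) :=
    measurable_const.min (measurable_infEDist.const_mul _)
  have f_map (n : ℕ) (i : ι) (x : X) : f n (S i x) ≤ f (n + 1) x := by
    refine min_le_min_left 1 ?_
    rw [pow_succ, mul_assoc]
    gcongr
    exact infEDist_map_le (hS i) hne (hSK i) x
  have mono (n : ℕ) : ∫⁻ x, f n x ∂μ ≤ ∫⁻ x, f (n + 1) x ∂μ := by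
    calc ∫⁻ x, f n x ∂μ = ∑ i, p i * ∫⁻ x, f n (S i x) ∂μ :=
          hμ.lintegral_eq (fun i => (hS i).continuous.measurable) (f_meas n)
      _ ≤ ∑ i, p i * ∫⁻ x, f (n + 1) x ∂μ := by
          gcongr with i _ x
          exact f_map n i x
      _ = ∫⁻ x, f (n + 1) x ∂μ := by rw [← Finset.sum_mul, hp, one_mul]
  have tendsto_zero : Filter.Tendsto (fun n => ∫⁻ x, f n x ∂μ) Filter.atTop (nhds 0) :=
    tendsto_lintegral_min_one_pow_mul (by exact_mod_cast hr) measurable_infEDist fun x =>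
      Metric.infEDist_ne_top hne
  have integral_zero : ∫⁻ x, f 0 x ∂μ = 0 :=
    le_antisymm (ge_of_tendsto' tendsto_zero fun n => monotone_nat_of_le_succ mono n.zero_le)
      zero_le
  filter_upwards [(lintegral_eq_zero_iff (f_meas 0)).1 integral_zero] with x hx
  rw [Metric.mem_iff_infEDist_zero_of_closed hK]
  simpa [hf] using hx

end IsSelfSimilar

end SelfSimilarMeasure

lemma integrable_of_ae_mem_isCompact {X F : Type*} [TopologicalSpace X] [T2Space X]
    [MeasurableSpace X] [OpensMeasurableSpace X] [NormedAddCommGroup F]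
    {μ : Measure X} [IsFiniteMeasure μ] {K : Set X} (hK : IsCompact K) (hμK : ∀ᵐ x ∂μ, x ∈ K)
    {f : X → F} (hf : Continuous f) : Integrable f μ := by
  rw [← Measure.restrict_eq_self_of_ae_mem hμK]
  exact hf.continuousOn.integrableOn_compact hK

lemma smul_add_smul_sub_of_add_eq_one {R M : Type*} [Ring R] [AddCommGroup M] [Module R M]
    {s t : R} (h : s + t = 1) (x y c : M) : s • x + t • y - c = s • (x - c) + t • (y - c) := by
  rw [smul_sub, smul_sub, sub_add_sub_comm, ← add_smul, h, one_smul]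

lemma norm_sub_sq_le_two_mul_add {V : Type*} [SeminormedAddCommGroup V] (x y z : V) :
    ‖x - y‖ ^ 2 ≤ 2 * (‖x - z‖ ^ 2 + ‖z - y‖ ^ 2) := by
  have triangle := norm_sub_le_norm_sub_add_norm_sub x z y
  calc ‖x - y‖ ^ 2 ≤ (‖x - z‖ + ‖z - y‖) ^ 2 := by gcongr
    _ ≤ 2 * (‖x - z‖ ^ 2 + ‖z - y‖ ^ 2) := add_sq_le

lemma integral_norm_sub_sq {V : Type*} [NormedAddCommGroup V] [InnerProductSpace ℝ V]
    [CompleteSpace V] [MeasurableSpace V] {μ : Measure V}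
    [IsProbabilityMeasure μ] {m : V} (hint : Integrable (fun x => x) μ) (hm : ∫ x, x ∂μ = m)
    (hsq : Integrable (fun x => ‖x - m‖ ^ 2) μ) (a : V) :
    ∫ x, ‖x - a‖ ^ 2 ∂μ = ∫ x, ‖x - m‖ ^ 2 ∂μ + ‖m - a‖ ^ 2 := by
  have hsub : Integrable (fun x => x - m) μ := hint.sub (integrable_const m)
  have centred : ∫ x, ⟪x - m, m - a⟫ ∂μ = 0 := by
    simp_rw [real_inner_comm (m - a)]
    rw [integral_inner hsub, integral_sub hint (integrable_const m)]
    simp [hm]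
  have expand (x : V) : ‖x - a‖ ^ 2 = ‖x - m‖ ^ 2 + 2 * ⟪x - m, m - a⟫ + ‖m - a‖ ^ 2 := by
    rw [← norm_add_sq_real, sub_add_sub_cancel]
  have hinner : Integrable (fun x => 2 * ⟪x - m, m - a⟫) μ := (hsub.inner_const _).const_mul 2
  have hadd : Integrable (fun x => ‖x - m‖ ^ 2 + 2 * ⟪x - m, m - a⟫) μ := hsq.add hinner
  rw [integral_congr_ae (.of_forall expand), integral_add hadd (integrable_const _),
    integral_add hsq hinner, integral_const_mul, centred]
  simp

lemma sum_le_of_subsingleton_support {ι : Type*} [Fintype ι] {f : ι → ℝ≥0∞} {B : ℝ≥0∞}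
    (hB : ∀ i, f i ≤ B) (hf : (Function.support f).Subsingleton) : ∑ i, f i ≤ B := by
  by_cases hz : ∀ i, f i = 0
  · simp [hz]
  · push Not at hz
    obtain ⟨i, hi⟩ := hz
    rw [Fintype.sum_eq_single i fun j hji => by_contra fun hj => hji (hf hj hi)]
    exact hB i

section Triangle

/-- The vertices of the triangle `Tri`; `vertex i` is the fixed point of `Smap i`. -/
def vertex : Fin 3 → E2 := ![pt 0 0, pt 1 0, pt (1 / 2) (Real.sqrt 3 / 2)]

/-- The centroid of `Tri`, which is the mean of the R-measure. -/
def centroid : E2 := pt (1 / 2) (Real.sqrt 3 / 6)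

lemma Tri_eq_convexHull_range : Tri = convexHull ℝ (Set.range vertex) := by
  simp only [Tri, vertex, Matrix.range_cons, Matrix.range_empty, Set.union_empty,
    Set.singleton_union]

lemma vertex_mem_Tri (i : Fin 3) : vertex i ∈ Tri :=
  Tri_eq_convexHull_range ▸ subset_convexHull ℝ _ (Set.mem_range_self i)

lemma isCompact_Tri : IsCompact Tri :=
  Tri_eq_convexHull_range ▸ (Set.finite_range vertex).isCompact_convexHull ℝ

lemma convex_Tri : Convex ℝ Tri := convex_convexHull ℝ _

lemma inner_eq_add (x y : E2) : ⟪x, y⟫ = x 0 * y 0 + x 1 * y 1 := by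
  simp [PiLp.inner_apply, Fin.sum_univ_two, mul_comm]

lemma inner_vertex_sub_centroid (i j : Fin 3) :
    ⟪vertex i - centroid, vertex j - centroid⟫ = if i = j then 1 / 3 else -(1 / 6) := by
  have sqrt_three_sq : Real.sqrt 3 ^ 2 = 3 := Real.sq_sqrt (by norm_num)
  rw [inner_eq_add]
  fin_cases i <;> fin_cases j <;> simp [vertex, centroid, pt] <;> linarith

lemma norm_vertex_sub_centroid_sq (i : Fin 3) : ‖vertex i - centroid‖ ^ 2 = 1 / 3 := by
  rw [← real_inner_self_eq_norm_sq, inner_vertex_sub_centroid, if_pos rfl]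

lemma norm_vertex_sub_vertex {i j : Fin 3} (h : i ≠ j) : ‖vertex i - vertex j‖ = 1 := by
  rw [← sq_eq_sq₀ (norm_nonneg _) zero_le_one, ← sub_sub_sub_cancel_right _ _ centroid,
    norm_sub_sq_real, inner_vertex_sub_centroid, if_neg h, norm_vertex_sub_centroid_sq,
    norm_vertex_sub_centroid_sq]
  norm_num

lemma sum_vertex_sub_centroid : ∑ i, (vertex i - centroid) = 0 := by
  ext k
  fin_cases k <;> simp [vertex, centroid, pt, Fin.sum_univ_three] <;> ring

lemma norm_sum_smul_vertex_sub_centroid_sq (w : Fin 3 → ℝ) :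
    ‖∑ j, w j • (vertex j - centroid)‖ ^ 2 =
      1 / 2 * ∑ j, w j ^ 2 - 1 / 6 * (∑ j, w j) ^ 2 := by
  rw [← real_inner_self_eq_norm_sq]
  simp only [Fin.sum_univ_three, inner_add_left, inner_add_right, real_inner_smul_left,
    real_inner_smul_right, inner_vertex_sub_centroid, Fin.reduceEq, reduceIte]
  ring

lemma Smap_eq (i : Fin 3) (x : E2) : Smap i x = (3⁻¹ : ℝ) • x + (2 / 3 : ℝ) • vertex i := by
  ext k
  fin_cases i <;> fin_cases k <;> simp [Smap, S1, S2, S3, vertex, pt]; ring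

lemma Smap_sub_Smap (i : Fin 3) (x y : E2) : Smap i x - Smap i y = (3⁻¹ : ℝ) • (x - y) := by
  simp only [Smap_eq]
  module

lemma Smap_add_smul (i : Fin 3) {s t : ℝ} (h : s + t = 1) (x y : E2) :
    Smap i (s • x + t • y) = s • Smap i x + t • Smap i y := by
  have Smap_eq' (z : E2) : Smap i z = (3⁻¹ : ℝ) • (z - -((2 : ℝ) • vertex i)) := by
    rw [Smap_eq]
    module
  simp only [Smap_eq', smul_add_smul_sub_of_add_eq_one h]
  module

lemma lipschitzWith_Smap (i : Fin 3) : LipschitzWith 3⁻¹ (Smap i) :=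
  LipschitzWith.of_dist_le_mul fun x y => by
    simp [dist_eq_norm, Smap_sub_Smap, norm_smul]

lemma Smap_vertex_self (i : Fin 3) : Smap i (vertex i) = vertex i := by
  rw [Smap_eq]
  module

lemma mapsTo_Smap_Tri (i : Fin 3) : Set.MapsTo (Smap i) Tri Tri := fun x hx =>
  Smap_eq i x ▸ convex_Tri hx (vertex_mem_Tri i) (by norm_num) (by norm_num) (by norm_num)

/-- The inverse of `Smap i`, used to rescale a first-level cell to the whole triangle. -/
def Sinv (i : Fin 3) (a : E2) : E2 := (3 : ℝ) • a - (2 : ℝ) • vertex i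

lemma norm_Smap_sub_sq (i : Fin 3) (x a : E2) : ‖Smap i x - a‖ ^ 2 = ‖x - Sinv i a‖ ^ 2 / 9 := by
  have : Smap i x - a = (3⁻¹ : ℝ) • (x - Sinv i a) := by
    rw [Smap_eq, Sinv]
    module
  rw [this, norm_smul, mul_pow]
  norm_num
  ring

lemma Sinv_injective (i : Fin 3) : Function.Injective (Sinv i) := fun _ _ h =>
  smul_right_injective E2 (three_ne_zero' ℝ) (sub_left_injective h)

lemma norm_sub_Sinv (i j : Fin 3) (x a : E2) :
    ‖x - Sinv j a‖ = ‖Sinv i (Smap j x) - Sinv i a‖ := by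
  simp only [Sinv, Smap_eq]
  congr 1
  module

lemma Sinv_Smap (i : Fin 3) (x : E2) : Sinv i (Smap i x) = x := by
  rw [Sinv, Smap_eq]
  module

/-- The barycentric coordinates of `x` with respect to the vertices of `Tri`, defined for all `x` in
the plane. As the triangle is equilateral, they are affine forms in the directions
`vertex j - centroid`. -/
def bary (x : E2) (j : Fin 3) : ℝ := 1 / 3 + 2 * ⟪vertex j - centroid, x - centroid⟫

lemma sum_bary (x : E2) : ∑ j, bary x j = 1 := by
  simp only [bary, Finset.sum_add_distrib, ← Finset.mul_sum, ← sum_inner,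
    sum_vertex_sub_centroid]
  simp

lemma sum_bary_smul_vertex (x : E2) : ∑ j, bary x j • vertex j = x := by
  have sqrt_three_sq : Real.sqrt 3 ^ 2 = 3 := Real.sq_sqrt (by norm_num)
  ext k
  fin_cases k <;>
    simp [bary, vertex, centroid, pt, inner_eq_add, Fin.sum_univ_three] <;>
    grind

lemma continuous_bary (j : Fin 3) : Continuous fun x => bary x j := by
  unfold bary
  fun_prop

lemma bary_vertex (i j : Fin 3) : bary (vertex i) j = if i = j then 1 else 0 := by
  rw [bary, inner_vertex_sub_centroid]
  grind

lemma bary_centroid (j : Fin 3) : bary centroid j = 1 / 3 := by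
  simp [bary]

lemma bary_add_smul {s t : ℝ} (h : s + t = 1) (x y : E2) (j : Fin 3) :
    bary (s • x + t • y) j = s * bary x j + t * bary y j := by
  simp only [bary, smul_add_smul_sub_of_add_eq_one h, inner_add_right, real_inner_smul_right]
  linear_combination (-1 / 3) * h

lemma bary_nonneg {x : E2} (hx : x ∈ Tri) (j : Fin 3) : 0 ≤ bary x j := by
  have convex_halfplane : Convex ℝ {y : E2 | 0 ≤ bary y j} := fun y hy z hz s t hs ht hst => by
    simp only [Set.mem_ofPred_eq] at hy hz ⊢
    rw [bary_add_smul hst]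
    positivity
  refine convexHull_min ?_ convex_halfplane (Tri_eq_convexHull_range ▸ hx)
  rintro _ ⟨i, rfl⟩
  simp only [Set.mem_ofPred_eq, bary_vertex]
  split_ifs <;> norm_num

lemma bary_Sinv (i : Fin 3) (a : E2) (j : Fin 3) :
    bary (Sinv i a) j = 3 * bary a j - 2 * if i = j then 1 else 0 := by
  have h := bary_add_smul (s := 3) (t := -2) (by norm_num) a (vertex i) j
  rwa [bary_vertex, neg_smul, ← sub_eq_add_neg, neg_mul, ← sub_eq_add_neg] at h

lemma bary_Smap (i : Fin 3) (x : E2) (j : Fin 3) :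
    bary (Smap i x) j = 1 / 3 * bary x j + 2 / 3 * if i = j then 1 else 0 := by
  rw [Smap_eq, bary_add_smul (by norm_num), bary_vertex, one_div]

lemma bary_Sinv_Smap_vertex (i j k l : Fin 3) :
    bary (Sinv i (Smap j (vertex k))) l = (if k = l then 1 else 0) +
      2 * (if j = l then 1 else 0) - 2 * if i = l then 1 else 0 := by
  rw [bary_Sinv, bary_Smap, bary_vertex]
  ring

lemma norm_sub_sq_eq_sum_bary (x y : E2) :
    ‖x - y‖ ^ 2 = 1 / 2 * ∑ j, (bary x j - bary y j) ^ 2 := by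
  have sub_centroid (z : E2) : ∑ j, bary z j • (vertex j - centroid) = z - centroid := by
    simp only [smul_sub, Finset.sum_sub_distrib, sum_bary_smul_vertex, ← Finset.sum_smul, sum_bary,
      one_smul]
  have norm_sq := norm_sum_smul_vertex_sub_centroid_sq fun j => bary x j - bary y j
  simp only [sub_smul, Finset.sum_sub_distrib, sum_bary, sub_centroid, sub_sub_sub_cancel_right]
    at norm_sq
  rw [norm_sq]
  ring

lemma sq_bary_sub_bary_le (x y : E2) (j : Fin 3) :
    (bary x j - bary y j) ^ 2 ≤ 2 * ‖x - y‖ ^ 2 := by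
  have := Finset.single_le_sum (fun i _ => sq_nonneg (bary x i - bary y i)) (Finset.mem_univ j)
  rw [norm_sub_sq_eq_sum_bary]
  linarith

end Triangle

/-- The defining equation of the R-measure. -/
abbrev IsRMeasure (P : Measure E2) : Prop :=
  IsSelfSimilar (fun _ : Fin 3 => (3 : ℝ≥0∞)⁻¹) Smap P

lemma isRMeasure_iff {P : Measure E2} :
    IsRMeasure P ↔ P = (3 : ℝ≥0∞)⁻¹ • (P.map S1 + P.map S2 + P.map S3) := by
  simp [IsRMeasure, IsSelfSimilar, Fin.sum_univ_three, Smap]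

namespace IsRMeasure

variable {P : Measure E2}

lemma three_mul_lintegral (hP : IsRMeasure P) {f : E2 → ℝ≥0∞} (hf : Measurable f) :
    3 * ∫⁻ x, f x ∂P = ∑ i, ∫⁻ x, f (Smap i x) ∂P := by
  rw [hP.lintegral_eq (fun i => (lipschitzWith_Smap i).continuous.measurable) hf, ← Finset.mul_sum,
    ← mul_assoc, ENNReal.mul_inv_cancel (by simp) (by simp), one_mul]

variable [IsProbabilityMeasure P]

lemma ae_mem_Tri (hP : IsRMeasure P) : ∀ᵐ x ∂P, x ∈ Tri :=
  hP.ae_mem (by simp [ENNReal.mul_inv_cancel]) (inv_lt_one_of_one_lt₀ (by norm_num))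
    lipschitzWith_Smap isCompact_Tri.isClosed ⟨_, vertex_mem_Tri 0⟩ mapsTo_Smap_Tri

variable {F : Type*} [NormedAddCommGroup F]

lemma integrable (hP : IsRMeasure P) {f : E2 → F} (hf : Continuous f) : Integrable f P :=
  integrable_of_ae_mem_isCompact isCompact_Tri hP.ae_mem_Tri hf

lemma integral_eq_smul_sum [NormedSpace ℝ F] (hP : IsRMeasure P) {f : E2 → F}
    (hf : Continuous f) : ∫ x, f x ∂P = (3⁻¹ : ℝ) • ∑ i, ∫ x, f (Smap i x) ∂P := by
  rw [hP.integral_eq (fun i => (lipschitzWith_Smap i).continuous.measurable)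
    hf.stronglyMeasurable (hP.integrable hf), Finset.smul_sum]
  simp

lemma integral_id_eq_centroid (hP : IsRMeasure P) : ∫ x, x ∂P = centroid := by
  have self_similar : ∫ x, (x - centroid) ∂P = (3⁻¹ : ℝ) • ∫ x, (x - centroid) ∂P := by
    have hint : Integrable (fun x => (3⁻¹ : ℝ) • (x - centroid)) P := hP.integrable (by fun_prop)
    have Smap_sub (i : Fin 3) (x : E2) : Smap i x - centroid =
        (3⁻¹ : ℝ) • (x - centroid) + (2 / 3 : ℝ) • (vertex i - centroid) := by
      rw [Smap_eq]
      module
    conv_lhs => rw [hP.integral_eq_smul_sum (by fun_prop)]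
    simp only [Smap_sub, integral_add hint (integrable_const _), Finset.sum_add_distrib,
      integral_const, integral_smul, probReal_univ, one_smul, ← Finset.smul_sum,
      sum_vertex_sub_centroid, Finset.sum_const, Finset.card_univ, Fintype.card_fin]
    module
  rw [integral_sub (hP.integrable continuous_id') (integrable_const _)] at self_similar
  simp only [integral_const, probReal_univ, one_smul] at self_similar
  have : (2 / 3 : ℝ) • (∫ x, x ∂P - centroid) = 0 := by
    rw [show (2 / 3 : ℝ) = 1 - 3⁻¹ by norm_num, sub_smul, one_smul, ← self_similar, sub_self]
  exact sub_eq_zero.1 ((smul_eq_zero.1 this).resolve_left (by norm_num))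

lemma integral_norm_sub_sq_eq (hP : IsRMeasure P) (a : E2) :
    ∫ x, ‖x - a‖ ^ 2 ∂P = 1 / 6 + ‖centroid - a‖ ^ 2 := by
  have parallel_axis (b : E2) : ∫ x, ‖x - b‖ ^ 2 ∂P =
      ∫ x, ‖x - centroid‖ ^ 2 ∂P + ‖centroid - b‖ ^ 2 :=
    integral_norm_sub_sq (hP.integrable continuous_id') hP.integral_id_eq_centroid
      (hP.integrable (by fun_prop)) b
  have norm_child (i : Fin 3) : ‖centroid - Sinv i centroid‖ ^ 2 = 4 / 3 := by
    have : centroid - Sinv i centroid = (2 : ℝ) • (vertex i - centroid) := by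
      rw [Sinv]
      module
    rw [this, norm_smul, mul_pow, norm_vertex_sub_centroid_sq]
    norm_num
  have self_similar := hP.integral_eq_smul_sum (f := fun x => ‖x - centroid‖ ^ 2) (by fun_prop)
  simp only [norm_Smap_sub_sq, integral_div, parallel_axis (Sinv _ _), norm_child, Finset.sum_const,
    Finset.card_univ, Fintype.card_fin, smul_eq_mul, nsmul_eq_mul] at self_similar
  rw [parallel_axis a]
  linarith

lemma err_singleton (hP : IsRMeasure P) (a : E2) :
    err P {a} = ENNReal.ofReal (1 / 6 + ‖centroid - a‖ ^ 2) := by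
  rw [← hP.integral_norm_sub_sq_eq, ofReal_integral_eq_lintegral_ofReal
    (hP.integrable (by fun_prop)) (.of_forall fun x => by positivity)]
  simp [err]

lemma integral_bary (hP : IsRMeasure P) (j : Fin 3) : ∫ x, bary x j ∂P = 1 / 3 := by
  have hsub : Integrable (fun x => x - centroid) P := hP.integrable (by fun_prop)
  have mean_zero : ∫ x, (x - centroid) ∂P = 0 := by
    rw [integral_sub (hP.integrable continuous_id') (integrable_const _),
      hP.integral_id_eq_centroid]
    simp
  simp only [bary]
  rw [integral_add (integrable_const _) ((hsub.const_inner _).const_mul 2), integral_const_mul,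
    integral_inner hsub, mean_zero]
  simp

/-- Bounds a convex function on the triangle by the affine function with the same vertex values. -/
lemma three_mul_lintegral_ofReal_le_of_convexOn (hP : IsRMeasure P) {f : E2 → ℝ}
    (hf : ConvexOn ℝ Tri f) :
    3 * ∫⁻ x, ENNReal.ofReal (f x) ∂P ≤ ∑ j, ENNReal.ofReal (f (vertex j)) := by
  have le_vertices : ∀ᵐ x ∂P, ENNReal.ofReal (f x) ≤
      ∑ j, ENNReal.ofReal (bary x j) * ENNReal.ofReal (f (vertex j)) := by
    filter_upwards [hP.ae_mem_Tri] with x hx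
    have nonneg := bary_nonneg hx
    have jensen : f x ≤ ∑ j, bary x j * max (f (vertex j)) 0 := by
      have h := hf.map_sum_le (t := Finset.univ) (fun j _ => nonneg j) (sum_bary x)
        (fun j _ => vertex_mem_Tri j)
      rw [sum_bary_smul_vertex] at h
      refine h.trans (Finset.sum_le_sum fun j _ => ?_)
      exact mul_le_mul_of_nonneg_left (le_max_left _ _) (nonneg j)
    refine (ENNReal.ofReal_le_ofReal jensen).trans_eq ?_
    rw [ENNReal.ofReal_sum_of_nonneg fun j _ => mul_nonneg (nonneg j) (le_max_right _ _)]
    simp only [ENNReal.ofReal_mul (nonneg _), ENNReal.ofReal_max, ENNReal.ofReal_zero, zero_le,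
      max_eq_left]
  have lintegral_bary (j : Fin 3) : ∫⁻ x, ENNReal.ofReal (bary x j) ∂P = 3⁻¹ := by
    rw [← ofReal_integral_eq_lintegral_ofReal (hP.integrable (continuous_bary j))
      (hP.ae_mem_Tri.mono fun x hx => bary_nonneg hx j), hP.integral_bary, one_div,
      ENNReal.ofReal_inv_of_pos three_pos, ENNReal.ofReal_ofNat]
  have meas (j : Fin 3) : Measurable fun x => ENNReal.ofReal (bary x j) :=
    (continuous_bary j).measurable.ennreal_ofReal
  calc 3 * ∫⁻ x, ENNReal.ofReal (f x) ∂P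
      ≤ 3 * ∫⁻ x, ∑ j, ENNReal.ofReal (bary x j) * ENNReal.ofReal (f (vertex j)) ∂P := by
        gcongr 3 * ?_
        exact lintegral_mono_ae le_vertices
    _ = ∑ j, ENNReal.ofReal (f (vertex j)) := by
        rw [lintegral_finsetSum _ fun j _ => (meas j).mul_const _, Finset.mul_sum]
        refine Finset.sum_congr rfl fun j _ => ?_
        rw [lintegral_mul_const _ (meas j), lintegral_bary, ← mul_assoc,
          ENNReal.mul_inv_cancel (by simp) (by simp), one_mul]

end IsRMeasure

lemma sum_ofReal_le_of_forall_sum_le {ι : Type*} [Fintype ι] {f : ι → ℝ} {C : ℝ}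
    (h : ∀ s : Finset ι, ∑ i ∈ s, f i ≤ C) : ∑ i, ENNReal.ofReal (f i) ≤ ENNReal.ofReal C := by
  classical
  calc ∑ i, ENNReal.ofReal (f i) = ∑ i with 0 < f i, ENNReal.ofReal (f i) := by
        refine (Finset.sum_filter_of_ne fun i _ hi => ?_).symm
        simpa using hi
    _ = ENNReal.ofReal (∑ i with 0 < f i, f i) :=
        (ENNReal.ofReal_sum_of_nonneg fun i hi => (Finset.mem_filter.1 hi).2.le).symm
    _ ≤ ENNReal.ofReal C := ENNReal.ofReal_le_ofReal (h _)

section Gain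

/-- The reduction of the squared distance from `x` to the code when `a` replaces the centroid, plus
the constant `2 / 27`. With this constant, `∫ (gain a)⁺ ∂P ≤ 2 / 27` for all `a` and the resulting
lower bound on the quantization errors is attained for one, two and three means. -/
def gain (a x : E2) : ℝ := ‖x - centroid‖ ^ 2 - ‖x - a‖ ^ 2 + 2 / 27

lemma gain_eq_inner (a x : E2) :
    gain a x = 2 * ⟪x - centroid, a - centroid⟫ - ‖a - centroid‖ ^ 2 + 2 / 27 := by
  rw [gain, ← sub_sub_sub_cancel_right x a centroid, norm_sub_sq_real (x - centroid)]
  ring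

lemma continuous_gain (a : E2) : Continuous (gain a) := by
  unfold gain
  fun_prop

lemma convexOn_gain (a : E2) : ConvexOn ℝ Set.univ (gain a) := by
  refine ⟨convex_univ, fun x _ y _ s t _ _ hst => le_of_eq ?_⟩
  simp only [gain_eq_inner, smul_add_smul_sub_of_add_eq_one hst, inner_add_left,
    real_inner_smul_left, smul_eq_mul]
  linear_combination (‖a - centroid‖ ^ 2 - 2 / 27) * hst

lemma gain_vertex (a : E2) (j : Fin 3) : gain a (vertex j) = 11 / 27 - ‖vertex j - a‖ ^ 2 := by
  rw [gain, norm_vertex_sub_centroid_sq]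
  ring

/-- The summand is three times the vector of barycentric coordinates of `Smap p.1 (vertex p.2)`. -/
lemma three_mul_sum_sq_le (B : Finset (Fin 3 × Fin 3)) :
    3 * ∑ l, (∑ p ∈ B, (2 * (if p.1 = l then 1 else 0) + if p.2 = l then 1 else 0)) ^ 2 ≤
      36 * B.card + 5 * B.card ^ 2 := by
  revert B
  decide +kernel

lemma norm_sum_Smap_vertex_sub_centroid_sq_le (B : Finset (Fin 3 × Fin 3)) :
    ‖∑ p ∈ B, (Smap p.1 (vertex p.2) - centroid)‖ ^ 2 ≤
      2 / 27 * (B.card * (9 - B.card)) := by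
  set N : Fin 3 → ℕ :=
    fun l => ∑ p ∈ B, (2 * (if p.1 = l then 1 else 0) + if p.2 = l then 1 else 0)
  have sum_eq : ∑ p ∈ B, (Smap p.1 (vertex p.2) - centroid) =
      ∑ l, (N l / 3 : ℝ) • (vertex l - centroid) := by
    have single (i : Fin 3) :
        ∑ l, (if i = l then 1 else 0 : ℝ) • (vertex l - centroid) = vertex i - centroid := by
      simp
    simp only [N, Nat.cast_sum, Finset.sum_div, Finset.sum_smul]
    rw [Finset.sum_comm]
    refine Finset.sum_congr rfl fun p _ => ?_
    push_cast
    simp only [div_eq_inv_mul _ (3 : ℝ), mul_smul,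
      add_smul, Finset.sum_add_distrib, ← Finset.smul_sum, single, Smap_eq]
    module
  have sum_N : ∑ l, (N l : ℝ) = 3 * B.card := by
    have : ∑ l, N l = 3 * B.card := by
      simp only [N]
      rw [Finset.sum_comm]
      simp [Finset.sum_add_distrib, mul_comm]
    exact_mod_cast this
  have sum_N_sq : 3 * ∑ l, (N l : ℝ) ^ 2 ≤ 36 * B.card + 5 * B.card ^ 2 := by
    exact_mod_cast three_mul_sum_sq_le B
  rw [sum_eq, norm_sum_smul_vertex_sub_centroid_sq]
  simp only [div_pow, ← Finset.sum_div, sum_N]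
  linarith

lemma sum_gain_le (a : E2) (B : Finset (Fin 3 × Fin 3)) :
    ∑ p ∈ B, gain a (Smap p.1 (vertex p.2)) ≤ 2 / 3 := by
  rcases B.eq_empty_or_nonempty with rfl | hB
  · norm_num
  set z := ∑ p ∈ B, (Smap p.1 (vertex p.2) - centroid) with hz
  have card_pos : (0 : ℝ) < B.card := by exact_mod_cast hB.card_pos
  have sum_eq : ∑ p ∈ B, gain a (Smap p.1 (vertex p.2)) =
      2 * ⟪z, a - centroid⟫ - B.card * ‖a - centroid‖ ^ 2 + 2 / 27 * B.card := by
    simp only [gain_eq_inner, Finset.sum_add_distrib, Finset.sum_sub_distrib, ← Finset.mul_sum,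
      ← sum_inner, Finset.sum_const, nsmul_eq_mul, ← hz]
    ring
  have complete_square := norm_sub_sq_real z ((B.card : ℝ) • (a - centroid))
  rw [real_inner_smul_right, norm_smul, mul_pow, Real.norm_natCast] at complete_square
  have norm_z : ‖z‖ ^ 2 ≤ _ := norm_sum_Smap_vertex_sub_centroid_sq_le B
  have := sq_nonneg ‖z - (B.card : ℝ) • (a - centroid)‖
  rw [sum_eq, ← mul_le_mul_iff_right₀ card_pos]
  linarith

lemma two_le_norm_vertex_sub_sq {i i' v' : Fin 3} (hne : i ≠ i') (hv' : v' ≠ i) (v : Fin 3) :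
    2 ≤ ‖vertex v - Sinv i (Smap i' (vertex v'))‖ ^ 2 := by
  have integer_bound : (4 : ℤ) ≤ ∑ l, ((if v = l then 1 else 0) - ((if v' = l then 1 else 0) +
      2 * (if i' = l then 1 else 0) - 2 * if i = l then 1 else 0)) ^ 2 := by
    revert i i' v' v
    decide
  have real_bound : (4 : ℝ) ≤ ∑ l, ((if v = l then 1 else 0) - ((if v' = l then 1 else 0) +
      2 * (if i' = l then 1 else 0) - 2 * if i = l then 1 else 0)) ^ 2 := by
    exact_mod_cast integer_bound
  simp only [norm_sub_sq_eq_sum_bary, bary_Sinv_Smap_vertex, bary_vertex]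
  linarith

lemma eq_of_gain_Sinv_vertex_pos {i i' v v' : Fin 3} (hne : i ≠ i') {a : E2}
    (hv : 0 < gain (Sinv i a) (vertex v)) (hv' : 0 < gain (Sinv i' a) (vertex v')) : v' = i := by
  rw [gain_vertex, sub_pos] at hv hv'
  rw [norm_sub_Sinv i, norm_sub_rev] at hv'
  have near := norm_sub_sq_le_two_mul_add (vertex v) (Sinv i (Smap i' (vertex v'))) (Sinv i a)
  by_contra hvi
  linarith [two_le_norm_vertex_sub_sq hne hvi v]

/-- The point `Sinv i (Smap i' (vertex i))` is the reflection of `vertex i` in `vertex i'`. -/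
lemma two_mul_norm_Smap_vertex_sub_centroid_sq_add_one_le {i i' j k : Fin 3} (hne : i ≠ i')
    (hjk : ¬(j = i' ∧ k = i')) :
    2 * ‖Smap j (vertex k) - centroid‖ ^ 2 + 1 ≤
      ‖Smap j (vertex k) - Sinv i (Smap i' (vertex i))‖ ^ 2 := by
  have integer_bound : 2 * ∑ l, ((if k = l then 1 else 0) + 2 * (if j = l then 1 else 0) - 1) ^ 2
      + (18 : ℤ) ≤ ∑ l, ((if k = l then 1 else 0) + 2 * (if j = l then 1 else 0) -
        3 * (2 * (if i' = l then 1 else 0) - if i = l then 1 else 0)) ^ 2 := by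
    revert i i' j k
    decide
  have real_bound : 2 * ∑ l, ((if k = l then 1 else 0) + 2 * (if j = l then 1 else 0) - 1) ^ 2
      + (18 : ℝ) ≤ ∑ l, ((if k = l then 1 else 0) + 2 * (if j = l then 1 else 0) -
        3 * (2 * (if i' = l then 1 else 0) - if i = l then 1 else 0)) ^ 2 := by
    exact_mod_cast integer_bound
  simp only [norm_sub_sq_eq_sum_bary, bary_Sinv_Smap_vertex, bary_Smap, bary_vertex,
    bary_centroid, Fin.sum_univ_three] at real_bound ⊢
  linarith

lemma gain_Smap_vertex_nonpos {i i' j k : Fin 3} (hne : i ≠ i') {w : E2}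
    (hw : ‖Sinv i (Smap i' (vertex i)) - w‖ ^ 2 < 11 / 27) (hjk : ¬(j = i' ∧ k = i')) :
    gain w (Smap j (vertex k)) ≤ 0 := by
  have near := norm_sub_sq_le_two_mul_add (Smap j (vertex k)) (Sinv i (Smap i' (vertex i))) w
  have far := two_mul_norm_Smap_vertex_sub_centroid_sq_add_one_le hne hjk
  rw [norm_sub_rev w] at near
  rw [gain]
  linarith

lemma gain_vertex_le {i i' : Fin 3} (hne : i ≠ i') {w : E2}
    (hw : ‖Sinv i (Smap i' (vertex i)) - w‖ ^ 2 < 11 / 27) : gain w (vertex i') ≤ 1 / 3 := by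
  have reflection : vertex i' - Sinv i (Smap i' (vertex i)) = vertex i - vertex i' := by
    rw [Sinv, Smap_eq]
    module
  have := norm_sub_sq_le_two_mul_add (vertex i') (Sinv i (Smap i' (vertex i))) w
  rw [reflection, norm_vertex_sub_vertex hne, norm_sub_rev w] at this
  rw [gain_vertex]
  linarith

end Gain

section LevelGain

/-- The total gain `∑ ω, ∫ (gain (S_ω⁻¹ a))⁺ ∂P` of the point `a` over the cells of level `k`, each
rescaled to the whole triangle. -/
def levelGain (P : Measure E2) : ℕ → E2 → ℝ≥0∞
  | 0, a => ∫⁻ x, ENNReal.ofReal (gain a x) ∂P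
  | k + 1, a => ∑ i, levelGain P k (Sinv i a)

namespace IsRMeasure

variable {P : Measure E2} [IsProbabilityMeasure P]

lemma nine_mul_levelGain_zero_le (hP : IsRMeasure P) (a : E2) :
    9 * levelGain P 0 a ≤ ∑ p : Fin 3 × Fin 3, ENNReal.ofReal (gain a (Smap p.1 (vertex p.2))) := by
  have convexOn (i : Fin 3) : ConvexOn ℝ Tri fun x => gain a (Smap i x) := by
    refine ⟨convex_Tri, fun x _ y _ s t hs ht hst => ?_⟩
    simp only [Smap_add_smul i hst]
    exact (convexOn_gain a).2 trivial trivial hs ht hst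
  calc 9 * levelGain P 0 a = ∑ i, 3 * ∫⁻ x, ENNReal.ofReal (gain a (Smap i x)) ∂P := by
        rw [← Finset.mul_sum,
          ← hP.three_mul_lintegral (continuous_gain a).measurable.ennreal_ofReal, ← mul_assoc,
          levelGain]
        norm_num
    _ ≤ ∑ i, ∑ j, ENNReal.ofReal (gain a (Smap i (vertex j))) :=
        Finset.sum_le_sum fun i _ => hP.three_mul_lintegral_ofReal_le_of_convexOn (convexOn i)
    _ = ∑ p : Fin 3 × Fin 3, ENNReal.ofReal (gain a (Smap p.1 (vertex p.2))) := by
        rw [Fintype.sum_prod_type]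

lemma levelGain_zero_le (hP : IsRMeasure P) (a : E2) : 27 * levelGain P 0 a ≤ 2 := by
  calc 27 * levelGain P 0 a = 3 * (9 * levelGain P 0 a) := by
        rw [← mul_assoc]
        norm_num
    _ ≤ 3 * ENNReal.ofReal (2 / 3) := by
        gcongr
        exact (hP.nine_mul_levelGain_zero_le a).trans
          (sum_ofReal_le_of_forall_sum_le (sum_gain_le a))
    _ = 2 := by
        rw [← ENNReal.ofReal_ofNat 3, ← ENNReal.ofReal_mul zero_le_three]
        norm_num

lemma exists_gain_vertex_pos (hP : IsRMeasure P) {a : E2} (ha : levelGain P 0 a ≠ 0) :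
    ∃ j, 0 < gain a (vertex j) := by
  by_contra! h
  have sum_zero := hP.three_mul_lintegral_ofReal_le_of_convexOn
    ((convexOn_gain a).subset (Set.subset_univ _) convex_Tri)
  simp only [ENNReal.ofReal_of_nonpos (h _), Finset.sum_const_zero, nonpos_iff_eq_zero,
    mul_eq_zero, OfNat.ofNat_ne_zero, false_or] at sum_zero
  exact ha sum_zero

lemma neg_one_lt_bary_of_levelGain_ne_zero (hP : IsRMeasure P) {k : ℕ} {a : E2}
    (ha : levelGain P k a ≠ 0) (j : Fin 3) : -1 < bary a j := by
  induction k generalizing a with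
  | zero =>
    obtain ⟨v, hv⟩ := hP.exists_gain_vertex_pos ha
    rw [gain_vertex] at hv
    have := sq_bary_sub_bary_le (vertex v) a j
    have := bary_nonneg (vertex_mem_Tri v) j
    nlinarith
  | succ k ih =>
    obtain ⟨i, -, hi⟩ := Finset.exists_ne_zero_of_sum_ne_zero ha
    have := ih hi
    rw [bary_Sinv] at this
    split_ifs at this <;> linarith

lemma neg_one_third_lt_bary_of_levelGain_succ_ne_zero (hP : IsRMeasure P) {k : ℕ} {a : E2}
    (ha : levelGain P (k + 1) a ≠ 0) (j : Fin 3) : -(1 / 3) < bary a j := by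
  obtain ⟨i, -, hi⟩ := Finset.exists_ne_zero_of_sum_ne_zero ha
  have := hP.neg_one_lt_bary_of_levelGain_ne_zero hi j
  rw [bary_Sinv] at this
  split_ifs at this <;> linarith

lemma levelGain_zero_le_one_of_overlap (hP : IsRMeasure P) {i i' : Fin 3} (hne : i ≠ i') {a : E2}
    (hi : levelGain P 0 (Sinv i a) ≠ 0) (hi' : levelGain P 0 (Sinv i' a) ≠ 0) :
    27 * levelGain P 0 (Sinv i a) ≤ 1 := by
  obtain ⟨v, hv⟩ := hP.exists_gain_vertex_pos hi
  obtain ⟨v', hv'⟩ := hP.exists_gain_vertex_pos hi'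
  obtain rfl : v' = i := eq_of_gain_Sinv_vertex_pos hne hv hv'
  have near : ‖Sinv v' (Smap i' (vertex v')) - Sinv v' a‖ ^ 2 < 11 / 27 := by
    rw [gain_vertex, norm_sub_Sinv v'] at hv'
    linarith
  have sum_le : ∑ p : Fin 3 × Fin 3, ENNReal.ofReal (gain (Sinv v' a) (Smap p.1 (vertex p.2))) ≤
      ENNReal.ofReal (1 / 3) := by
    rw [Fintype.sum_eq_single (i', i') fun p hp => ?_, Smap_vertex_self]
    · exact ENNReal.ofReal_le_ofReal (gain_vertex_le hne near)
    · exact ENNReal.ofReal_of_nonpos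
        (gain_Smap_vertex_nonpos hne near fun h => hp (Prod.ext h.1 h.2))
  calc 27 * levelGain P 0 (Sinv v' a) = 3 * (9 * levelGain P 0 (Sinv v' a)) := by
        rw [← mul_assoc]
        norm_num
    _ ≤ 3 * ENNReal.ofReal (1 / 3) := by
        gcongr
        exact (hP.nine_mul_levelGain_zero_le _).trans sum_le
    _ = 1 := by
        rw [← ENNReal.ofReal_ofNat 3, ← ENNReal.ofReal_mul zero_le_three]
        norm_num

lemma exists_levelGain_Sinv_eq_zero (hP : IsRMeasure P) (k : ℕ) (a : E2) :
    ∃ j, levelGain P k (Sinv j a) = 0 := by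
  by_contra! h
  have bary_gt (j : Fin 3) : 1 / 3 < bary a j := by
    have := hP.neg_one_lt_bary_of_levelGain_ne_zero (h j) j
    rw [bary_Sinv, if_pos rfl] at this
    linarith
  have := sum_bary a
  rw [Fin.sum_univ_three] at this
  linarith [bary_gt 0, bary_gt 1, bary_gt 2]

lemma support_levelGain_succ_subsingleton (hP : IsRMeasure P) (k : ℕ) (a : E2) :
    (Function.support fun i => levelGain P (k + 1) (Sinv i a)).Subsingleton := by
  intro i hi i' hi'
  by_contra hne
  have bary_gt {l : Fin 3} (hl : levelGain P (k + 1) (Sinv l a) ≠ 0) : 5 / 9 < bary a l := by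
    have := hP.neg_one_third_lt_bary_of_levelGain_succ_ne_zero hl l
    rw [bary_Sinv, if_pos rfl] at this
    linarith
  have bary_gt' (j : Fin 3) : -(1 / 9) < bary a j := by
    have := hP.neg_one_third_lt_bary_of_levelGain_succ_ne_zero hi j
    rw [bary_Sinv] at this
    split_ifs at this <;> linarith
  have pair_le_sum : (bary a i + 1 / 9) + (bary a i' + 1 / 9) ≤ ∑ j, (bary a j + 1 / 9) :=
    Finset.add_le_sum (f := fun j => bary a j + 1 / 9)
      (fun j _ => (neg_lt_iff_pos_add.1 (bary_gt' j)).le) (Finset.mem_univ i)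
      (Finset.mem_univ i') hne
  rw [Finset.sum_add_distrib, sum_bary] at pair_le_sum
  norm_num at pair_le_sum
  linarith [bary_gt hi, bary_gt hi']

lemma levelGain_one_le (hP : IsRMeasure P) (a : E2) : 27 * levelGain P 1 a ≤ 2 := by
  by_cases hsub : (Function.support fun i => 27 * levelGain P 0 (Sinv i a)).Subsingleton
  · rw [levelGain, Finset.mul_sum]
    exact sum_le_of_subsingleton_support (fun i => hP.levelGain_zero_le _) hsub
  · obtain ⟨i, hi, i', hi', hne⟩ := Set.not_subsingleton_iff.1 hsub
    obtain ⟨j, hj⟩ := hP.exists_levelGain_Sinv_eq_zero 0 a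
    have le_one (l : Fin 3) : 27 * levelGain P 0 (Sinv l a) ≤ 1 := by
      by_cases hl : levelGain P 0 (Sinv l a) = 0
      · simp [hl]
      · obtain ⟨l', hne', hl'⟩ : ∃ l', l ≠ l' ∧ levelGain P 0 (Sinv l' a) ≠ 0 := by
          by_cases hli : l = i
          · exact ⟨i', hli ▸ hne, right_ne_zero_of_mul hi'⟩
          · exact ⟨i, hli, right_ne_zero_of_mul hi⟩
        exact hP.levelGain_zero_le_one_of_overlap hne' hl hl'
    calc 27 * levelGain P 1 a = ∑ l ∈ Finset.univ.erase j, 27 * levelGain P 0 (Sinv l a) := by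
          rw [levelGain, Finset.mul_sum, Finset.sum_erase _ (by rw [hj, mul_zero])]
      _ ≤ ∑ l ∈ Finset.univ.erase j, 1 := Finset.sum_le_sum fun l _ => le_one l
      _ = 2 := by simp

theorem levelGain_le (hP : IsRMeasure P) (k : ℕ) (a : E2) : 27 * levelGain P k a ≤ 2 := by
  induction k generalizing a with
  | zero => exact hP.levelGain_zero_le a
  | succ k ih =>
    cases k with
    | zero => exact hP.levelGain_one_le a
    | succ k =>
      rw [levelGain, Finset.mul_sum]
      refine sum_le_of_subsingleton_support (fun i => ih _) ?_
      exact (hP.support_levelGain_succ_subsingleton k a).anti fun i hi => right_ne_zero_of_mul hi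

end IsRMeasure

end LevelGain

section Quantization

variable {P : Measure E2}

lemma err_anti {α β : Set E2} (h : α ⊆ β) : err P β ≤ err P α :=
  lintegral_mono fun _ => biInf_mono h

lemma measurable_iInf_ofReal_norm_sub_sq {A : Set E2} (hA : A.Countable) :
    Measurable fun x : E2 => ⨅ a ∈ A, ENNReal.ofReal (‖x - a‖ ^ 2) :=
  .biInf _ hA fun a _ => (by fun_prop : Measurable fun x : E2 => ‖x - a‖ ^ 2).ennreal_ofReal

namespace IsRMeasure

lemma mul_err_eq_sum_err_image (hP : IsRMeasure P) {A : Set E2} (hA : A.Countable) :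
    27 * err P A = ∑ i, err P (Sinv i '' A) := by
  have scale (i : Fin 3) (x : E2) : 9 * ⨅ a ∈ A, ENNReal.ofReal (‖Smap i x - a‖ ^ 2) =
      ⨅ b ∈ Sinv i '' A, ENNReal.ofReal (‖x - b‖ ^ 2) := by
    simp only [iInf_image, ENNReal.mul_iInf_of_ne (by simp : (9 : ℝ≥0∞) ≠ 0) (by simp)]
    congr! with a
    rw [norm_Smap_sub_sq, ← ENNReal.ofReal_ofNat 9, ← ENNReal.ofReal_mul (by norm_num),
      mul_div_cancel₀ _ (by norm_num)]
  calc 27 * err P A = 9 * (3 * err P A) := by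
        rw [← mul_assoc]
        norm_num
    _ = ∑ i, 9 * ∫⁻ x, ⨅ a ∈ A, ENNReal.ofReal (‖Smap i x - a‖ ^ 2) ∂P := by
        rw [err, hP.three_mul_lintegral (measurable_iInf_ofReal_norm_sub_sq hA), Finset.mul_sum]
    _ = ∑ i, err P (Sinv i '' A) := by
        simp only [← lintegral_const_mul' _ _ (ENNReal.ofNat_ne_top (n := 9)), scale, err]

lemma mul_err_iUnion_Smap_le (hP : IsRMeasure P) {γ : Fin 3 → Set E2} (hγ : ∀ i, (γ i).Countable) :
    27 * err P (⋃ i, Smap i '' γ i) ≤ ∑ i, err P (γ i) := by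
  rw [hP.mul_err_eq_sum_err_image (Set.countable_iUnion fun i => (hγ i).image _)]
  refine Finset.sum_le_sum fun i _ => err_anti fun x hx => ?_
  exact ⟨Smap i x, Set.mem_iUnion_of_mem i (Set.mem_image_of_mem _ hx), Sinv_Smap i x⟩

end IsRMeasure

lemma range_Smap (x : E2) : (Set.range fun i => Smap i x) = {S1 x, S2 x, S3 x} := by
  ext y
  simp [Smap, or_comm, or_left_comm]

lemma iUnion_Sword_succ {k : ℕ} (β : (Fin (k + 1) → Fin 3) → Set E2) :
    ⋃ ω, Sword ω '' β ω = ⋃ i, Smap i '' ⋃ ω, Sword ω '' β (Fin.cons i ω) := by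
  have Sword_cons (i : Fin 3) (ω : Fin k → Fin 3) :
      Sword (Fin.cons i ω : Fin (k + 1) → Fin 3) = Smap i ∘ Sword ω := by
    ext x
    simp [Sword, List.ofFn_succ]
  rw [← (Fin.consEquiv fun _ => Fin 3).surjective.iUnion_comp, Set.iUnion_prod']
  simp only [Set.image_iUnion, ← Set.image_comp, ← Sword_cons]
  rfl

namespace IsRMeasure

lemma pow_mul_err_iUnion_Sword_le (hP : IsRMeasure P) {k : ℕ} {β : (Fin k → Fin 3) → Set E2}
    (hβ : ∀ ω, (β ω).Countable) :
    27 ^ k * err P (⋃ ω, Sword ω '' β ω) ≤ ∑ ω, err P (β ω) := by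
  induction k with
  | zero =>
    rw [pow_zero, one_mul, Fintype.sum_subsingleton _ ![]]
    exact err_anti fun x hx => Set.mem_iUnion_of_mem ![] ⟨x, hx, rfl⟩
  | succ k ih =>
    calc 27 ^ (k + 1) * err P (⋃ ω, Sword ω '' β ω)
        = 27 ^ k * (27 * err P (⋃ i, Smap i '' ⋃ ω, Sword ω '' β (Fin.cons i ω))) := by
          rw [iUnion_Sword_succ, pow_succ, mul_assoc]
      _ ≤ 27 ^ k * ∑ i, err P (⋃ ω, Sword ω '' β (Fin.cons i ω)) := by
          gcongr
          exact hP.mul_err_iUnion_Smap_le fun i => Set.countable_iUnion fun ω => (hβ _).image _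
      _ ≤ ∑ i, ∑ ω, err P (β (Fin.cons i ω)) := by
          rw [Finset.mul_sum]
          exact Finset.sum_le_sum fun i _ => ih fun ω => hβ _
      _ = ∑ ω, err P (β ω) := by
          rw [← Fintype.sum_prod_type', ← (Fin.consEquiv fun _ => Fin 3).sum_comp]
          rfl

variable [IsProbabilityMeasure P]

lemma le_err_add_sum_levelGain_zero (hP : IsRMeasure P) (A : Finset E2) :
    13 ≤ 54 * err P A + 54 * ∑ a ∈ A, levelGain P 0 a := by
  have meas (a : E2) : Measurable fun x => ENNReal.ofReal (gain a x) :=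
    (continuous_gain a).measurable.ennreal_ofReal
  have pointwise (x : E2) : ENNReal.ofReal (‖x - centroid‖ ^ 2 + 2 / 27) ≤
      (⨅ a ∈ (A : Set E2), ENNReal.ofReal (‖x - a‖ ^ 2)) + ∑ a ∈ A, ENNReal.ofReal (gain a x) := by
    rw [← tsub_le_iff_right]
    refine le_iInf₂ fun a ha => tsub_le_iff_right.2 ?_
    calc ENNReal.ofReal (‖x - centroid‖ ^ 2 + 2 / 27)
        = ENNReal.ofReal (‖x - a‖ ^ 2 + gain a x) := by
          rw [gain]
          ring_nf
      _ ≤ ENNReal.ofReal (‖x - a‖ ^ 2) + ENNReal.ofReal (gain a x) := ENNReal.ofReal_add_le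
      _ ≤ _ := by
          gcongr
          exact Finset.single_le_sum (f := fun a => ENNReal.ofReal (gain a x))
            (fun _ _ => zero_le) ha
  have integral_eq : ∫⁻ x, ENNReal.ofReal (‖x - centroid‖ ^ 2 + 2 / 27) ∂P =
      ENNReal.ofReal (13 / 54) := by
    rw [← ofReal_integral_eq_lintegral_ofReal (hP.integrable (by fun_prop))
      (.of_forall fun x => by positivity), integral_add (hP.integrable (by fun_prop))
      (integrable_const _), hP.integral_norm_sub_sq_eq]
    norm_num
  calc (13 : ℝ≥0∞) = 54 * ∫⁻ x, ENNReal.ofReal (‖x - centroid‖ ^ 2 + 2 / 27) ∂P := by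
        rw [integral_eq, ← ENNReal.ofReal_ofNat 54, ← ENNReal.ofReal_mul (by norm_num)]
        norm_num
    _ ≤ 54 * (err P A + ∑ a ∈ A, levelGain P 0 a) := by
        gcongr 54 * ?_
        simp only [levelGain]
        rw [err, ← lintegral_finsetSum _ fun a _ => meas a,
          ← lintegral_add_right _ (Finset.measurable_sum _ fun a _ => meas a)]
        exact lintegral_mono pointwise
    _ = 54 * err P A + 54 * ∑ a ∈ A, levelGain P 0 a := mul_add _ _ _

lemma mul_three_pow_le_err_add_sum_levelGain (hP : IsRMeasure P) (k : ℕ) (A : Finset E2) :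
    13 * 3 ^ k ≤ 54 * (27 ^ k * err P A) + 54 * ∑ a ∈ A, levelGain P k a := by
  classical
  induction k generalizing A with
  | zero => simpa using hP.le_err_add_sum_levelGain_zero A
  | succ k ih =>
    calc (13 * 3 ^ (k + 1) : ℝ≥0∞) = ∑ _i : Fin 3, 13 * 3 ^ k := by
          simp only [Finset.sum_const, Finset.card_univ, Fintype.card_fin, nsmul_eq_mul]
          push_cast
          ring
      _ ≤ ∑ i, (54 * (27 ^ k * err P (A.image (Sinv i))) +
            54 * ∑ b ∈ A.image (Sinv i), levelGain P k b) :=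
          Finset.sum_le_sum fun i _ => ih _
      _ = 54 * (27 ^ k * ∑ i, err P (Sinv i '' A)) +
            54 * ∑ i, ∑ a ∈ A, levelGain P k (Sinv i a) := by
          simp only [Finset.sum_add_distrib, ← Finset.mul_sum, Finset.coe_image,
            Finset.sum_image (Sinv_injective _).injOn]
      _ = 54 * (27 ^ (k + 1) * err P A) + 54 * ∑ a ∈ A, levelGain P (k + 1) a := by
          simp only [levelGain]
          rw [← hP.mul_err_eq_sum_err_image A.countable_toSet, Finset.sum_comm, pow_succ, mul_assoc]

theorem mul_three_pow_le_err_add_ncard (hP : IsRMeasure P) (k : ℕ) {α : Set E2} (hα : α.Finite) :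
    13 * 3 ^ k ≤ 54 * (27 ^ k * err P α) + 4 * α.ncard := by
  lift α to Finset E2 using hα
  refine (hP.mul_three_pow_le_err_add_sum_levelGain k α).trans ?_
  gcongr _ + ?_
  calc 54 * ∑ a ∈ α, levelGain P k a = 2 * ∑ a ∈ α, 27 * levelGain P k a := by
        rw [← Finset.mul_sum, ← mul_assoc]
        norm_num
    _ ≤ 2 * ∑ a ∈ α, 2 := by
        gcongr
        exact hP.levelGain_le k _
    _ = 4 * (α : Set E2).ncard := by
        rw [Set.ncard_coe_finset, Finset.sum_const, nsmul_eq_mul]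
        ring

theorem isOptimal_of_err_le (hP : IsRMeasure P) (k : ℕ) {n : ℕ} {α : Set E2} (hα : α.Finite)
    (hcard : α.ncard ≤ n) (herr : 54 * (27 ^ k * err P α) + 4 * n ≤ 13 * 3 ^ k) :
    IsOptimal P n α := by
  refine ⟨hα, hcard, le_antisymm (le_iInf₂ fun β hβ => ?_) (iInf₂_le α ⟨hα, hcard⟩)⟩
  have scaled_le : 54 * (27 ^ k * err P α) ≤ 54 * (27 ^ k * err P β) := by
    refine (ENNReal.add_le_add_iff_right (ENNReal.mul_ne_top (by simp)
      (ENNReal.natCast_ne_top n) : (4 * n : ℝ≥0∞) ≠ ∞)).1 (herr.trans ?_)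
    refine (hP.mul_three_pow_le_err_add_ncard k hβ.1).trans ?_
    gcongr
    exact hβ.2
  rwa [ENNReal.mul_le_mul_iff_right (by simp) (by simp),
    ENNReal.mul_le_mul_iff_right (by simp) (ENNReal.pow_ne_top (by simp))] at scaled_le

lemma mul_err_le_of_forall_mem (hP : IsRMeasure P) {A : Set E2} (hA : A.Countable) {q : Fin 3 → E2}
    (hq : ∀ i, q i ∈ A) :
    27 * err P A ≤ ENNReal.ofReal (1 / 2 + ∑ i, ‖centroid - Sinv i (q i)‖ ^ 2) := by
  calc 27 * err P A ≤ ∑ i, err P {Sinv i (q i)} := by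
        rw [hP.mul_err_eq_sum_err_image hA]
        gcongr with i
        exact err_anti (Set.singleton_subset_iff.2 (Set.mem_image_of_mem _ (hq i)))
    _ = ENNReal.ofReal (1 / 2 + ∑ i, ‖centroid - Sinv i (q i)‖ ^ 2) := by
        simp only [hP.err_singleton]
        rw [← ENNReal.ofReal_sum_of_nonneg fun i _ => by positivity, Finset.sum_add_distrib]
        norm_num

lemma mul_quantErr_one_le (hP : IsRMeasure P) : 54 * quantErr P 1 ≤ 9 := by
  calc 54 * quantErr P 1 ≤ 54 * err P {centroid} := by
        gcongr
        exact iInf₂_le _ (by simp)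
    _ = 9 := by
        rw [hP.err_singleton, ← ENNReal.ofReal_ofNat 54, ← ENNReal.ofReal_mul (by norm_num)]
        norm_num

lemma mul_quantErr_two_le (hP : IsRMeasure P) : 54 * quantErr P 2 ≤ 5 := by
  set q : E2 := (2⁻¹ : ℝ) • (Smap 0 centroid + Smap 1 centroid) with hq
  have dist_zero : centroid - Sinv 0 q = vertex 0 - vertex 1 := by
    simp only [hq, Sinv, Smap_eq]
    module
  have dist_one : centroid - Sinv 1 q = vertex 1 - vertex 0 := by
    simp only [hq, Sinv, Smap_eq]
    module
  calc 54 * quantErr P 2 ≤ 54 * err P {q, Smap 2 centroid} := by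
        gcongr
        exact iInf₂_le _ ⟨Set.toFinite _, (Set.ncard_insert_le _ _).trans (by simp)⟩
    _ = 2 * (27 * err P {q, Smap 2 centroid}) := by
        rw [← mul_assoc]
        norm_num
    _ ≤ 2 * ENNReal.ofReal (5 / 2) := by
        gcongr
        refine (hP.mul_err_le_of_forall_mem (Set.toFinite _).countable
          (q := ![q, q, Smap 2 centroid]) fun i => ?_).trans_eq ?_
        · fin_cases i <;> simp
        · have dist_two : centroid - Sinv 2 (Smap 2 centroid) = 0 := by rw [Sinv_Smap, sub_self]
          simp only [Fin.sum_univ_three, Matrix.cons_val, dist_zero, dist_one, dist_two, norm_zero,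
            norm_vertex_sub_vertex, ne_eq, zero_ne_one, one_ne_zero, not_false_eq_true]
          norm_num
    _ = 5 := by
        rw [← ENNReal.ofReal_ofNat 2, ← ENNReal.ofReal_mul zero_le_two]
        norm_num

lemma mul_err_range_Smap_centroid_le (hP : IsRMeasure P) :
    54 * err P (Set.range fun i => Smap i centroid) ≤ 1 := by
  calc 54 * err P (Set.range fun i => Smap i centroid)
      = 2 * (27 * err P (Set.range fun i => Smap i centroid)) := by
        rw [← mul_assoc]
        norm_num
    _ ≤ 2 * ENNReal.ofReal (1 / 2) := by
        gcongr
        refine (hP.mul_err_le_of_forall_mem (Set.countable_range _) Set.mem_range_self).trans_eq ?_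
        simp [Sinv_Smap]
    _ = 1 := by
        rw [← ENNReal.ofReal_ofNat 2, ← ENNReal.ofReal_mul zero_le_two]
        norm_num

lemma isOptimal_range_Smap_centroid (hP : IsRMeasure P) :
    IsOptimal P 3 (Set.range fun i => Smap i centroid) := by
  refine hP.isOptimal_of_err_le 0 (Set.finite_range _) ?_ ?_
  · simpa only [Set.image_univ, Set.ncard_univ, Nat.card_eq_fintype_card, Fintype.card_fin] using
      Set.ncard_image_le (f := fun i => Smap i centroid) Set.finite_univ
  · calc 54 * (27 ^ 0 * err P (Set.range fun i => Smap i centroid)) + 4 * (3 : ℕ) ≤ 1 + 12 := by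
          rw [pow_zero, one_mul]
          gcongr
          · exact hP.mul_err_range_Smap_centroid_le
          · norm_num
      _ = 13 * 3 ^ 0 := by norm_num

lemma mul_quantErr_add_le (hP : IsRMeasure P) {m : ℕ} (hm : m ∈ Finset.Icc 1 3) :
    54 * quantErr P m + 4 * m ≤ 13 := by
  obtain ⟨one_le, le_three⟩ := Finset.mem_Icc.1 hm
  interval_cases m
  · exact (add_le_add_left hP.mul_quantErr_one_le _).trans_eq (by norm_num)
  · exact (add_le_add_left hP.mul_quantErr_two_le _).trans_eq (by norm_num)
  · rw [← hP.isOptimal_range_Smap_centroid.2.2]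
    exact (add_le_add_left hP.mul_err_range_Smap_centroid_le _).trans_eq (by norm_num)

end IsRMeasure

end Quantization

theorem stmt_15_general (P : Measure E2) [IsProbabilityMeasure P]
    (hP : P = (3 : ℝ≥0∞)⁻¹ • (P.map S1 + P.map S2 + P.map S3)) (ℓ : ℕ)
    (m : (Fin ℓ → Fin 3) → ℕ) (hm : ∀ ω, m ω ∈ Finset.Icc 1 3)
    (β : (Fin ℓ → Fin 3) → Set E2) (hβ : ∀ ω, IsOptimal P (m ω) (β ω)) :
    IsOptimal P (∑ ω, m ω) (⋃ ω, Sword ω '' β ω) := by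
  rw [← isRMeasure_iff] at hP
  refine hP.isOptimal_of_err_le ℓ (Set.finite_iUnion fun ω => (hβ ω).1.image _) ?_ ?_
  · refine (Set.ncard_iUnion_le_of_fintype _).trans (Finset.sum_le_sum fun ω _ => ?_)
    exact (Set.ncard_image_le (hβ ω).1).trans (hβ ω).2.1
  · calc 54 * (27 ^ ℓ * err P (⋃ ω, Sword ω '' β ω)) + 4 * (∑ ω, m ω : ℕ)
        ≤ 54 * ∑ ω, err P (β ω) + 4 * (∑ ω, m ω : ℕ) := by
          gcongr
          exact hP.pow_mul_err_iUnion_Sword_le fun ω => (hβ ω).1.countable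
      _ = ∑ ω, (54 * quantErr P (m ω) + 4 * m ω) := by
          simp only [(hβ _).2.2, Nat.cast_sum, Finset.sum_add_distrib, Finset.mul_sum]
      _ ≤ ∑ _ω : Fin ℓ → Fin 3, 13 := Finset.sum_le_sum fun ω _ => hP.mul_quantErr_add_le (hm ω)
      _ = 13 * 3 ^ ℓ := by simp [mul_comm]

/-- For ℓ ≥ 1 and 2·3^ℓ < n < 3^{ℓ+1}, any optimal set of two-means α₂, and any
J ⊆ {1,2,3}^ℓ with card J = n − 2·3^ℓ, the set
⋃_{ω ∈ J} S_ω(α₃) ∪ ⋃_{ω ∉ J} S_ω(α₂) is an optimal set of n-means for the R-measure P,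
where c = (1/2, √3/6) and α₃ = {S₁(c), S₂(c), S₃(c)}. -/
theorem stmt_15 (P : Measure E2) [IsProbabilityMeasure P]
    (hP : P = (3 : ℝ≥0∞)⁻¹ • (P.map S1 + P.map S2 + P.map S3))
    (ℓ n : ℕ) (hℓ : 1 ≤ ℓ) (h1 : 2 * 3 ^ ℓ < n) (h2 : n < 3 ^ (ℓ + 1))
    (α₂ : Set E2) (hα₂ : IsOptimal P 2 α₂)
    (J : Set (Fin ℓ → Fin 3)) (hJ : J.ncard = n - 2 * 3 ^ ℓ) :
    IsOptimal P n
      ((⋃ ω ∈ J, Sword ω '' ({S1 (pt (1/2) (Real.sqrt 3 / 6)),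
          S2 (pt (1/2) (Real.sqrt 3 / 6)), S3 (pt (1/2) (Real.sqrt 3 / 6))} : Set E2))
        ∪ ⋃ ω ∈ Jᶜ, Sword ω '' α₂) := by
  classical
  have optimal (ω : Fin ℓ → Fin 3) : IsOptimal P (2 + if ω ∈ J then 1 else 0)
      (if ω ∈ J then Set.range fun i => Smap i centroid else α₂) := by
    split_ifs
    exacts [(isRMeasure_iff.2 hP).isOptimal_range_Smap_centroid, hα₂]
  have sum_eq : ∑ ω, (2 + if ω ∈ J then 1 else 0) = n := by
    have : ∑ ω, (2 + if ω ∈ J then 1 else 0) = 2 * 3 ^ ℓ + J.ncard := by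
      simp [Finset.sum_add_distrib, Set.ncard_eq_toFinset_card', mul_comm]
    lia
  have union_optimal := stmt_15_general P hP ℓ _ (fun ω => by split_ifs <;> simp) _ optimal
  rw [sum_eq] at union_optimal
  simpa only [apply_ite, Set.iUnion_ite, Set.mem_compl_iff, range_Smap, centroid]
    using union_optimal

end
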